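/- Let D be a k-DFA with state set V, let ε > 0, and let M, L be positive integers with ML ≤ k. Then P(ML, ε) ≤ M·|V|·P(L, ε), where P(L', ε) = max_{v ∈ V} P(v, L', ε). -/

import Mathlib

/-- A weighted DFA on the alphabet `[k]` (modelled as `Fin k`) with state type `V`:
a transition function, a root state, and a cost function into `ℕ∞`. -/
structure WDFA (k : ℕ) (V : Type*) where
  trans : V → Fin k → V
  root : V
  cost : V → Fin k → ℕ∞

/-- The final state of the walk from `v` reading the word `w`. -/
def WDFA.walkEnd {k : ℕ} {V : Type*} (D : WDFA k V) : V → List (Fin k) → V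
  | v, [] => v
  | v, t :: w => D.walkEnd (D.trans v t) w

/-- The cost of reading the word `w` starting from state `v`. -/
def WDFA.wordCost {k : ℕ} {V : Type*} (D : WDFA k V) : V → List (Fin k) → ℕ∞
  | _, [] => 0
  | v, t :: w => D.cost v t + D.wordCost (D.trans v t) w

/-- A `k`-DFA: a weighted DFA on alphabet `[k]` in which, at every state `v`, the
costs `c(v, ·)` form a bijection onto `{1, …, k}`. -/
def WDFA.IsKDFA {k : ℕ} {V : Type*} (D : WDFA k V) : Prop :=
  ∀ v : V, ∃ π : Equiv.Perm (Fin k), ∀ t : Fin k, D.cost v t = (((π t : ℕ) + 1 : ℕ) : ℕ∞)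

/-- A permutation `τ ∈ S_k` read as the word `τ(1), …, τ(k)`. -/
def permWord {k : ℕ} (τ : Equiv.Perm (Fin k)) : List (Fin k) :=
  (List.finRange k).map τ

/-- A function-word `w : Fin L → Fin k` viewed as a list `w(1), …, w(L)`. -/
def listOf {k L : ℕ} (w : Fin L → Fin k) : List (Fin k) :=
  (List.finRange L).map w

/-- `P(v, L, ε)`: the probability that `c(v, w) < (1/2 − ε)kL` for a uniformly random
permutational (injective) word `w` of length `L` on `[k]`, expressed as
(number of such words) · (k−L)!/k!. A cost of `∞` is never `< (1/2 − ε)kL`. -/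
noncomputable def badProb {k : ℕ} {V : Type*} (D : WDFA k V) (v : V) (L : ℕ) (ε : ℝ) : ℝ :=
  (Nat.card {w : Fin L → Fin k // Function.Injective w ∧
      ∃ m : ℕ, D.wordCost v (listOf w) = (m : ℕ∞) ∧ (m : ℝ) < (1/2 - ε) * k * L} : ℝ)
    * (Nat.factorial (k - L)) / (Nat.factorial k)

/-!
Cut a word of length `M * L` into `M` consecutive blocks of length `L`. If the word costs less than
`M * c`, then some block costs less than `c` when read from the state the walk has reached. For a
uniformly random injective word each block is a uniformly random injective word of length `L`, but
the state from which it is read depends on the preceding letters; a union bound over the `M` blocks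
and over *all* `|V|` states removes that dependence.
-/

open Finset

section RestrictEmbedding

variable {ι κ α : Type*}

/-- The decomposition of an injection `w : κ ↪ α` into its restriction along `e : ι ↪ κ` and its
values off the range of `e`, which avoid the values of that restriction. -/
noncomputable def embeddingEquivSigmaRestrict (e : ι ↪ κ) :
    (κ ↪ α) ≃ Σ f : ι ↪ α, ((Set.range e)ᶜ : Set κ) ↪ ((Set.range f)ᶜ : Set α) := by
  classical
  exact (Equiv.embeddingCongr ((Equiv.Set.sumCompl (Set.range e)).symm.trans
    (Equiv.sumCongr (Equiv.ofInjective e e.injective).symm (Equiv.refl _))) (Equiv.refl α)).trans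
    Equiv.sumEmbeddingEquivSigmaEmbeddingRestricted

theorem embeddingEquivSigmaRestrict_fst (e : ι ↪ κ) (w : κ ↪ α) :
    (embeddingEquivSigmaRestrict e w).1 = e.trans w :=
  rfl

variable [Fintype ι] [Fintype κ] [Fintype α] [DecidableEq (ι ↪ α)]

theorem card_filter_trans_mem (e : ι ↪ κ) (A : Finset (ι ↪ α)) :
    #{w : κ ↪ α | e.trans w ∈ A} =
      #A * (Fintype.card α - Fintype.card ι).descFactorial
        (Fintype.card κ - Fintype.card ι) := by
  classical
  have card_off_range (f : ι ↪ α) :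
      Fintype.card (((Set.range e)ᶜ : Set κ) ↪ ((Set.range f)ᶜ : Set α)) =
        (Fintype.card α - Fintype.card ι).descFactorial (Fintype.card κ - Fintype.card ι) := by
    rw [Fintype.card_embedding_eq, Fintype.card_compl_set, Fintype.card_compl_set,
      Set.card_range_of_injective e.injective, Set.card_range_of_injective f.injective]
  calc #{w : κ ↪ α | e.trans w ∈ A}
      = #(A.sigma fun f =>
          (univ : Finset (((Set.range e)ᶜ : Set κ) ↪ ((Set.range f)ᶜ : Set α)))) :=
        card_equiv (embeddingEquivSigmaRestrict e) fun w => by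
          rw [mem_filter_univ, mem_sigma, and_iff_left (mem_univ _),
            embeddingEquivSigmaRestrict_fst]
    _ = _ := by simp only [card_sigma, card_univ, card_off_range, sum_const, smul_eq_mul]

theorem dens_filter_trans_mem (hκα : Fintype.card κ ≤ Fintype.card α) (e : ι ↪ κ)
    (A : Finset (ι ↪ α)) :
    ({w : κ ↪ α | e.trans w ∈ A} : Finset _).dens = A.dens := by
  let d := (Fintype.card α - Fintype.card ι).descFactorial (Fintype.card κ - Fintype.card ι)
  have hd : (d : ℚ≥0) ≠ 0 := by
    rw [Nat.cast_ne_zero, Ne, Nat.descFactorial_eq_zero_iff_lt, not_lt]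
    exact Nat.sub_le_sub_right hκα _
  have card_embedding : Fintype.card (κ ↪ α) = Fintype.card (ι ↪ α) * d := by
    simpa using card_filter_trans_mem e (univ : Finset (ι ↪ α))
  rw [dens_eq_card_div_card, dens_eq_card_div_card, card_filter_trans_mem, card_embedding,
    Nat.cast_mul, Nat.cast_mul, mul_div_mul_right _ _ hd]

end RestrictEmbedding

/-- The positions of the `i`-th of `M` consecutive blocks of length `L`. -/
def blockEmbedding {M : ℕ} (L : ℕ) (i : Fin M) : Fin L ↪ Fin (M * L) :=
  (Function.Embedding.sectR i (Fin L)).trans finProdFinEquiv.toEmbedding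

theorem coe_blockEmbedding_apply {M L : ℕ} (i : Fin M) (j : Fin L) :
    (blockEmbedding L i j : ℕ) = i * L + j := by
  rw [add_comm, mul_comm (i : ℕ)]
  rfl

theorem listOf_eq_flatten_blocks {k M L : ℕ} (w : Fin (M * L) → Fin k) :
    listOf w = (List.ofFn fun i : Fin M => listOf (w ∘ blockEmbedding L i)).flatten := by
  simp only [listOf, ← List.ofFn_eq_map, List.ofFn_mul w]
  congr! 5 with i j
  exact congrArg w (Fin.ext (coe_blockEmbedding_apply i j).symm)

namespace WDFA

variable {k : ℕ} {V : Type*} (D : WDFA k V)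

theorem wordCost_append (v : V) (l₁ l₂ : List (Fin k)) :
    D.wordCost v (l₁ ++ l₂) = D.wordCost v l₁ + D.wordCost (D.walkEnd v l₁) l₂ := by
  induction l₁ generalizing v with
  | nil => simp only [List.nil_append, wordCost, walkEnd, zero_add]
  | cons t l ih => simp only [List.cons_append, wordCost, walkEnd, ih, add_assoc]

/-- The word `l` read from `v` has finite cost less than the real threshold `c`. -/
def CostLT (v : V) (l : List (Fin k)) (c : ℝ) : Prop :=
  ∃ m : ℕ, D.wordCost v l = m ∧ (m : ℝ) < c

variable {D}

theorem CostLT.pos {v : V} {l : List (Fin k)} {c : ℝ} (h : D.CostLT v l c) : 0 < c := by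
  obtain ⟨m, -, hmc⟩ := h
  exact m.cast_nonneg.trans_lt hmc

theorem CostLT.of_append {v : V} {l₁ l₂ : List (Fin k)} {c₁ c₂ : ℝ}
    (h : D.CostLT v (l₁ ++ l₂) (c₁ + c₂)) :
    D.CostLT v l₁ c₁ ∨ D.CostLT (D.walkEnd v l₁) l₂ c₂ := by
  obtain ⟨m, hm, hmc⟩ := h
  rw [wordCost_append] at hm
  obtain ⟨h₁, h₂⟩ := WithTop.add_ne_top.mp (hm ▸ ENat.natCast_ne_top m)
  obtain ⟨a, ha⟩ := ENat.ne_top_iff_exists.mp h₁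
  obtain ⟨b, hb⟩ := ENat.ne_top_iff_exists.mp h₂
  have hab : a + b = m := by
    rw [← ha, ← hb] at hm
    exact_mod_cast hm
  have hlt : (a : ℝ) + b < c₁ + c₂ := by
    rw [← hab] at hmc
    exact_mod_cast hmc
  exact (lt_or_lt_of_add_lt_add hlt).imp (⟨a, ha.symm, ·⟩) (⟨b, hb.symm, ·⟩)

theorem CostLT.exists_mem_of_flatten {v : V} {ls : List (List (Fin k))} {c : ℝ}
    (h : D.CostLT v ls.flatten (ls.length * c)) : ∃ l ∈ ls, ∃ u, D.CostLT u l c := by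
  induction ls generalizing v with
  | nil => exact absurd h.pos (by simp)
  | cons l ls ih =>
    rw [List.flatten_cons, List.length_cons, Nat.cast_succ, add_one_mul, add_comm] at h
    rcases h.of_append with head | tail
    · exact ⟨l, List.mem_cons_self, v, head⟩
    · obtain ⟨l', hl', hcost⟩ := ih tail
      exact ⟨l', List.mem_cons_of_mem l hl', hcost⟩

theorem CostLT.exists_block {M L : ℕ} {v : V} {w : Fin (M * L) → Fin k} {c : ℝ}
    (h : D.CostLT v (listOf w) (M * c)) :
    ∃ (i : Fin M) (u : V), D.CostLT u (listOf (w ∘ blockEmbedding L i)) c := by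
  rw [listOf_eq_flatten_blocks] at h
  obtain ⟨l, hl, u, hu⟩ := CostLT.exists_mem_of_flatten (by rwa [List.length_ofFn])
  obtain ⟨i, rfl⟩ := List.mem_ofFn.mp hl
  exact ⟨i, u, hu⟩

variable (D)

open Classical in
/-- The injective words of length `L` whose cost from `v` is less than `c`. A permutational word is
encoded as an embedding, so the density of this set is a probability for a uniformly random one. -/
noncomputable def cheapWords (v : V) (L : ℕ) (c : ℝ) : Finset (Fin L ↪ Fin k) :=
  {w | D.CostLT v (listOf w) c}

variable {D} in
theorem mem_cheapWords {v : V} {L : ℕ} {c : ℝ} {w : Fin L ↪ Fin k} :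
    w ∈ D.cheapWords v L c ↔ D.CostLT v (listOf w) c := by
  simp only [cheapWords, mem_filter_univ]

theorem dens_cheapWords_mul_le [Fintype V] {M L : ℕ} (hML : M * L ≤ k) (v : V) (c : ℝ) :
    (D.cheapWords v (M * L) (M * c)).dens ≤ M * ∑ u, (D.cheapWords u L c).dens := by
  have cover : D.cheapWords v (M * L) (M * c) ⊆
      (univ : Finset (Fin M × V)).biUnion fun p =>
        {w | (blockEmbedding L p.1).trans w ∈ D.cheapWords p.2 L c} := by
    intro w hw
    obtain ⟨i, u, hcost⟩ := (mem_cheapWords.mp hw).exists_block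
    rw [mem_biUnion]
    exact ⟨(i, u), mem_univ _, (mem_filter_univ _).mpr (mem_cheapWords.mpr hcost)⟩
  calc (D.cheapWords v (M * L) (M * c)).dens
      ≤ ∑ p : Fin M × V, ({w | (blockEmbedding L p.1).trans w ∈ D.cheapWords p.2 L c} :
          Finset (Fin (M * L) ↪ Fin k)).dens := (dens_le_dens cover).trans dens_biUnion_le
    _ = ∑ p : Fin M × V, (D.cheapWords p.2 L c).dens :=
        sum_congr rfl fun p _ => dens_filter_trans_mem (by simpa using hML) _ _
    _ = M * ∑ u, (D.cheapWords u L c).dens := by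
        simp only [Fintype.sum_prod_type, sum_const, card_univ, Fintype.card_fin, nsmul_eq_mul]

theorem badProb_eq_dens_cheapWords {L : ℕ} (hLk : L ≤ k) (v : V) (ε : ℝ) :
    badProb D v L ε = ((D.cheapWords v L ((1 / 2 - ε) * k * L)).dens : ℝ) := by
  have card_badWords : Nat.card {w : Fin L → Fin k // Function.Injective w ∧
      D.CostLT v (listOf w) ((1 / 2 - ε) * k * L)} =
      #(D.cheapWords v L ((1 / 2 - ε) * k * L)) := by
    rw [← Fintype.card_coe, ← Nat.card_eq_fintype_card]
    exact Nat.card_congr <| (Equiv.subtypeSubtypeEquivSubtypeInter _ _).symm.trans <|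
      (Equiv.subtypeInjectiveEquivEmbedding _ _).subtypeEquiv fun w => by
        rw [mem_cheapWords]
        rfl
  have card_words : (k.factorial : ℝ) = (k - L).factorial * Fintype.card (Fin L ↪ Fin k) := by
    rw [Fintype.card_embedding_eq, Fintype.card_fin, Fintype.card_fin]
    exact_mod_cast (Nat.factorial_mul_descFactorial hLk).symm
  have hfac : ((k - L).factorial : ℝ) ≠ 0 := Nat.cast_ne_zero.mpr (Nat.factorial_ne_zero _)
  calc badProb D v L ε
      = #(D.cheapWords v L ((1 / 2 - ε) * k * L)) * (k - L).factorial / k.factorial := by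
        rw [← card_badWords]; rfl
    _ = _ := by
        rw [card_words, nnratCast_dens, mul_comm, mul_div_mul_left _ _ hfac]

end WDFA

theorem badProb_mul_le_mul_sum {k M L : ℕ} (hM : 0 < M) (hML : M * L ≤ k) {V : Type*} [Fintype V]
    (D : WDFA k V) (v : V) (ε : ℝ) :
    badProb D v (M * L) ε ≤ M * ∑ u, badProb D u L ε := by
  have threshold : (1 / 2 - ε) * k * (M * L : ℕ) = M * ((1 / 2 - ε) * k * L) := by
    push_cast
    ring
  simp only [D.badProb_eq_dens_cheapWords hML, threshold,
    D.badProb_eq_dens_cheapWords ((Nat.le_mul_of_pos_left L hM).trans hML)]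
  exact_mod_cast D.dens_cheapWords_mul_le hML v ((1 / 2 - ε) * k * L)

theorem badProb_mul_le_general {k M L : ℕ} (hM : 0 < M) (hML : M * L ≤ k)
    {V : Type*} [Fintype V] (D : WDFA k V) (ε : ℝ) :
    (⨆ v : V, badProb D v (M * L) ε) ≤
      (M : ℝ) * (Fintype.card V) * ⨆ v : V, badProb D v L ε := by
  have : Nonempty V := ⟨D.root⟩
  refine ciSup_le fun v => ?_
  calc badProb D v (M * L) ε
      ≤ M * ∑ u, badProb D u L ε := badProb_mul_le_mul_sum hM hML D v ε
    _ ≤ M * ∑ _u : V, ⨆ v, badProb D v L ε := by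
        gcongr with u
        exact le_ciSup (Set.finite_range fun v => badProb D v L ε).bddAbove u
    _ = M * Fintype.card V * ⨆ v, badProb D v L ε := by
        rw [sum_const, card_univ, nsmul_eq_mul, mul_assoc]

/-- For a `k`-DFA `D` and positive integers `M, L` with `ML ≤ k`:
`P(ML, ε) ≤ M·|V|·P(L, ε)`, where `P(L', ε) = max_v P(v, L', ε)`. -/
theorem badProb_mul_le (k M L : ℕ) (hM : 0 < M) (hL : 0 < L) (hML : M * L ≤ k)
    {V : Type*} [Fintype V] [Nonempty V] (D : WDFA k V) (hD : D.IsKDFA)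
    (ε : ℝ) (hε : 0 < ε) :
    (⨆ v : V, badProb D v (M * L) ε) ≤
      (M : ℝ) * (Fintype.card V) * ⨆ v : V, badProb D v L ε :=
  badProb_mul_le_general hM hML D ε
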